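/- Let n be a positive integer with n ≡ 3 (mod 4). Then, modulo [n]*Phi_n(q)^4, - [n]^3 * (q^{1-n} / (1+q)^2) * ((q^4;q^4)_{(n-3)/4}^2 / (q^6;q^4)_{(n-3)/4}^2) ≡ [n]^2 q^{(1-n)/2} * ((q^3;q^4)_{(n-1)/2} / (q^5;q^4)_{(n-1)/2}). -/

import Mathlib

open Finset

/-- The generator `q` of the field `ℚ(q)` of rational functions. -/
noncomputable def q : RatFunc ℚ := RatFunc.X

/-- The `q`-integer `[r] = (1 - q^r)/(1 - q)`. -/
noncomputable def qint (r : ℤ) : RatFunc ℚ := (1 - q ^ r) / (1 - q)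

/-- The `q`-shifted factorial `(x; b)_m = (1-x)(1-xb)⋯(1-x b^(m-1))`. -/
noncomputable def qpoch (x b : RatFunc ℚ) (m : ℕ) : RatFunc ℚ :=
  ∏ i ∈ Finset.range m, (1 - x * b ^ i)

/-- `f ≡ g (mod P)`: `f - g = P * (r/s)` with `s` coprime to `P`. -/
def qcong (f g : RatFunc ℚ) (P : Polynomial ℚ) : Prop :=
  ∃ r s : Polynomial ℚ, IsCoprime s P ∧
    f - g = algebraMap (Polynomial ℚ) (RatFunc ℚ) P *
      (algebraMap (Polynomial ℚ) (RatFunc ℚ) r / algebraMap (Polynomial ℚ) (RatFunc ℚ) s)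

/-!
Write `n = 4m + 3`, `E = (q^4; q^4)_m` and `F = (q^2; q^4)_{m+1}`. The factors of
`(q^3; q^4)_{2m+1} = (1 - q^n) N` and of `D = (q; q^4)_{2m+2}` pair up symmetrically about `n`, with
the same offsets as the exponents in `E` and in `F`. The difference of the two sides is
`-(1 - q^n)^3 (E^2 D + q^(2m+1) N F^2) / ((1 - q) q^(n-1) F^2 D)`.

For `d ∣ n` the reflection gives `v(N) = 2 v(E)` and `v(D) = 2 v(F)` at `Φ_d`, so for `d > 1` the
difference has valuation at least `3 + 2 v(E) - 2 v(F) ≥ 1`, because `v(F) ≤ v(E) + 1`. At `Φ_n`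
both `v(E)` and `v(F)` vanish, but modulo `(1 - q^n)^2` the reflected products are, up to powers
of `q`, `(-q^n)^m E^2` and `(-q^n)^(m+1) F^2`. Their signs differ, so the two summands cancel modulo
`Φ_n^2` and the valuation is at least 5.
-/

open Polynomial

lemma prime_cyclotomic_rat {d : ℕ} (hd : 0 < d) : Prime (cyclotomic d ℚ) :=
  (cyclotomic.irreducible_rat hd).prime

lemma emultiplicity_cyclotomic_one_sub_X_pow {d a : ℕ} (hd : 0 < d) (ha : 0 < a) :
    emultiplicity (cyclotomic d ℚ) (1 - X ^ a) = if d ∣ a then 1 else 0 := by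
  have hp := prime_cyclotomic_rat hd
  have factor (e : ℕ) :
      emultiplicity (cyclotomic d ℚ) (cyclotomic e ℚ) = if d = e then 1 else 0 := by
    split_ifs with h
    · rw [← h, FiniteMultiplicity.emultiplicity_self (.of_not_isUnit hp.not_isUnit hp.ne_zero)]
    · exact emultiplicity_eq_zero.2 fun hdvd ↦
        hp.not_isUnit ((cyclotomic.isCoprime_rat h).isUnit_of_dvd' dvd_rfl hdvd)
  rw [← neg_sub, emultiplicity_neg, ← prod_cyclotomic_eq_X_pow_sub_one ha,
    Finset.emultiplicity_prod hp, sum_congr rfl fun e _ ↦ factor e, sum_ite_eq]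
  simp [ha.ne']

lemma cyclotomic_not_dvd_X {d : ℕ} (hd : 0 < d) : ¬ cyclotomic d ℚ ∣ X := fun h ↦
  (prime_cyclotomic_rat hd).not_dvd_one <|
    (dvd_sub_right (h.trans (dvd_pow_self X hd.ne'))).1 (cyclotomic.dvd_X_pow_sub_one d ℚ)

lemma geom_sum_mul_cyclotomic_pow_dvd {n k : ℕ} {p : ℚ[X]} (hn : 1 < n)
    (hdvd : ∀ d, d ∣ n → 1 < d → cyclotomic d ℚ ∣ p) (hpow : cyclotomic n ℚ ^ (k + 1) ∣ p) :
    (∑ i ∈ range n, X ^ i) * cyclotomic n ℚ ^ k ∣ p := by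
  have hmem : n ∈ n.divisors.erase 1 := mem_erase.2 ⟨hn.ne', Nat.mem_divisors_self n (by omega)⟩
  rw [← prod_cyclotomic_eq_geom_sum (by omega), ← mul_prod_erase _ _ hmem, mul_right_comm,
    ← pow_succ']
  refine IsCoprime.mul_dvd (IsCoprime.prod_right fun d hd ↦ ?_) hpow
    (prod_dvd_of_coprime (fun _ _ _ _ h ↦ cyclotomic.isCoprime_rat h) fun d hd ↦ ?_)
  · exact (cyclotomic.isCoprime_rat (ne_of_mem_erase hd).symm).pow_left
  · simp only [mem_erase, Nat.mem_divisors] at hd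
    have : 0 < d := Nat.pos_of_dvd_of_pos hd.2.2.1 (by omega)
    exact hdvd d hd.2.2.1 (by omega)

lemma pow_dvd_num_of_le_emultiplicity {K : Type*} [Field K] {π A B : K[X]} {k : ℕ}
    (hπ : Prime π) (h : k + emultiplicity π B ≤ emultiplicity π A) :
    π ^ k ∣ (algebraMap K[X] (RatFunc K) A / algebraMap K[X] (RatFunc K) B).num := by
  rcases eq_or_ne B 0 with rfl | hB
  · simp
  set f := algebraMap K[X] (RatFunc K) A / algebraMap K[X] (RatFunc K) B
  have cross : f.num * B = A * f.denom := (RatFunc.num_mul_eq_mul_denom_iff hB).2 rfl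
  have hfin : emultiplicity π B ≠ ⊤ :=
    finiteMultiplicity_iff_emultiplicity_ne_top.1 (.of_prime_left hπ hB)
  refine pow_dvd_of_le_emultiplicity ((ENat.add_le_add_iff_right hfin).1 ?_)
  calc k + emultiplicity π B ≤ emultiplicity π A := h
    _ ≤ emultiplicity π A + emultiplicity π f.denom := le_self_add
    _ = emultiplicity π f.num + emultiplicity π B := by
      rw [← emultiplicity_mul hπ, ← emultiplicity_mul hπ, cross]

lemma qcong_of_dvd_num_sub {f g : RatFunc ℚ} {P : ℚ[X]} (h : P ∣ (f - g).num) : qcong f g P := by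
  obtain ⟨r, hr⟩ := h
  refine ⟨r, (f - g).denom, ?_, ?_⟩
  · exact ((RatFunc.isCoprime_num_denom (f - g)).of_isCoprime_of_dvd_left ⟨r, hr⟩).symm
  · rw [← mul_div_assoc, ← map_mul, ← hr, RatFunc.num_div_denom]

/-- The `q`-shifted factorial `(X^a; X^b)_m`, as a polynomial. -/
noncomputable def qpochPoly (a b m : ℕ) : ℚ[X] := ∏ j ∈ range m, (1 - X ^ (a + b * j))

/-- The product of the `(1 - X^(n-c)) (1 - X^(n+c))`, where `c` runs over the exponents of
`(X^a; X^b)_m`. It regroups a longer `q`-shifted factorial whose exponents are symmetric about `n`;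
the subtraction is meant for `c ≤ n`. -/
noncomputable def reflectedQpochPoly (n a b m : ℕ) : ℚ[X] :=
  ∏ j ∈ range m, (1 - X ^ (n - (a + b * j))) * (1 - X ^ (n + (a + b * j)))

lemma qpochPoly_two_mul {n a x : ℕ} (m : ℕ) (h : n + a = x + 2 * a * m) :
    qpochPoly x (2 * a) (2 * m) = reflectedQpochPoly n a (2 * a) m := by
  rw [qpochPoly, reflectedQpochPoly, two_mul m, prod_range_add, ← prod_range_reflect,
    ← prod_mul_distrib]
  refine prod_congr rfl fun j hj ↦ ?_
  obtain ⟨l, rfl⟩ := Nat.exists_eq_add_of_lt (mem_range.1 hj)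
  have hsub : x + 2 * a * (j + l + 1 - 1 - j) = n - (a + 2 * a * j) := by
    rw [show j + l + 1 - 1 - j = l by omega]
    refine Nat.eq_sub_of_add_eq ?_
    linarith
  rw [hsub, show x + 2 * a * (j + l + 1 + j) = n + (a + 2 * a * j) by linarith]

lemma qpochPoly_two_mul_add_one (x b m : ℕ) :
    qpochPoly x b (2 * m + 1) = (1 - X ^ (x + b * m)) * reflectedQpochPoly (x + b * m) b b m := by
  rw [qpochPoly, reflectedQpochPoly, show 2 * m + 1 = m + (1 + m) by ring, prod_range_add,
    prod_range_add, prod_range_one, ← prod_range_reflect, add_zero, mul_left_comm,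
    ← prod_mul_distrib]
  refine congrArg _ (prod_congr rfl fun j hj ↦ ?_)
  obtain ⟨l, rfl⟩ := Nat.exists_eq_add_of_lt (mem_range.1 hj)
  have hsub : x + b * (j + l + 1 - 1 - j) = x + b * (j + l + 1) - (b + b * j) := by
    rw [show j + l + 1 - 1 - j = l by omega]
    refine Nat.eq_sub_of_add_eq ?_
    ring
  rw [hsub]
  ring

lemma emultiplicity_cyclotomic_qpochPoly {d a : ℕ} (b m : ℕ) (hd : 0 < d) (ha : 0 < a) :
    emultiplicity (cyclotomic d ℚ) (qpochPoly a b m) = #{j ∈ range m | d ∣ a + b * j} := by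
  rw [qpochPoly, Finset.emultiplicity_prod (prime_cyclotomic_rat hd), card_filter,
    Nat.cast_sum]
  refine sum_congr rfl fun j _ ↦ ?_
  rw [emultiplicity_cyclotomic_one_sub_X_pow hd (by omega), Nat.cast_ite, Nat.cast_one,
    Nat.cast_zero]

lemma emultiplicity_cyclotomic_reflectedQpochPoly {d n a b m : ℕ} (hd : 0 < d) (hdn : d ∣ n)
    (ha : 0 < a) (hn : ∀ j < m, a + b * j < n) :
    emultiplicity (cyclotomic d ℚ) (reflectedQpochPoly n a b m) =
      2 * emultiplicity (cyclotomic d ℚ) (qpochPoly a b m) := by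
  have hp := prime_cyclotomic_rat hd
  rw [reflectedQpochPoly, qpochPoly, Finset.emultiplicity_prod hp, Finset.emultiplicity_prod hp,
    mul_sum]
  refine sum_congr rfl fun j hj ↦ ?_
  have hlt := hn j (mem_range.1 hj)
  rw [emultiplicity_mul hp, two_mul]
  repeat rw [emultiplicity_cyclotomic_one_sub_X_pow hd (by omega)]
  simp only [Nat.dvd_sub_iff_right hlt.le hdn, Nat.dvd_add_right hdn]

-- Modulo `(1 - x^n)^2`, each pair contributes `-x^n (1 - x^c)^2`, up to the factor `x^c`.
lemma one_sub_pow_sq_dvd_prod_reflect {R ι : Type*} [CommRing R] (x : R) {n : ℕ} {s : Finset ι}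
    {c : ι → ℕ} (hc : ∀ j ∈ s, c j ≤ n) :
    (1 - x ^ n) ^ 2 ∣ x ^ (∑ j ∈ s, c j) * ∏ j ∈ s, (1 - x ^ (n - c j)) * (1 - x ^ (n + c j)) -
      (-x ^ n) ^ #s * (∏ j ∈ s, (1 - x ^ c j)) ^ 2 := by
  rw [← prod_pow_eq_pow_sum, ← prod_mul_distrib, ← prod_pow, ← prod_const, ← prod_mul_distrib,
    ← Ideal.mem_span_singleton, ← Ideal.Quotient.eq, map_prod, map_prod]
  refine prod_congr rfl fun j hj ↦ Ideal.Quotient.eq.2 (Ideal.mem_span_singleton.2 ⟨x ^ c j, ?_⟩)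
  have hsplit : x ^ n = x ^ (n - c j) * x ^ c j := by rw [← pow_add, Nat.sub_add_cancel (hc j hj)]
  rw [pow_add]
  linear_combination (1 - x ^ n * x ^ c j) * hsplit

lemma one_sub_X_pow_sq_dvd_reflectedQpochPoly {n a b m : ℕ} (h : ∀ j < m, a + b * j ≤ n) :
    (1 - X ^ n : ℚ[X]) ^ 2 ∣ X ^ (∑ j ∈ range m, (a + b * j)) * reflectedQpochPoly n a b m -
      (-X ^ n) ^ m * qpochPoly a b m ^ 2 := by
  simpa only [reflectedQpochPoly, qpochPoly, card_range] using
    one_sub_pow_sq_dvd_prod_reflect (X : ℚ[X]) (s := range m) fun j hj ↦ h j (mem_range.1 hj)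

-- If `d` is odd and divides `4j + 2`, then `4j + 2` is an odd multiple of `2d`, so subtracting
-- `2d` gives a nonnegative multiple of both `4` and `d`.
lemma card_dvd_two_add_four_mul_le {d : ℕ} (hd : Odd d) (m : ℕ) :
    #{j ∈ range (m + 1) | d ∣ 2 + 4 * j} ≤ #{j ∈ range m | d ∣ 4 + 4 * j} + 1 := by
  have hzero : #{j ∈ range m | d ∣ 4 + 4 * j} + 1 = #{j ∈ range (m + 1) | d ∣ 4 * j} := by
    rw [card_filter, card_filter, sum_range_succ']
    simp [mul_add, add_comm]
  have hle (j : ℕ) (hj : d ∣ 2 + 4 * j) : d ≤ 2 * j + 1 :=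
    Nat.le_of_dvd (by omega) ((Nat.coprime_two_right.2 hd).dvd_of_dvd_mul_left
      (show d ∣ 2 * (2 * j + 1) by convert hj using 1; ring))
  obtain ⟨t, rfl⟩ := hd
  rw [hzero]
  refine card_le_card_of_injOn (· - t) (fun j hj ↦ ?_) fun i hi j hj hij ↦ ?_
  · simp only [coe_filter, mem_range, Set.mem_ofPred_eq] at hj ⊢
    have := hle j hj.2
    refine ⟨by omega, ?_⟩
    rw [show 4 * (j - t) = 2 + 4 * j - (2 * t + 1) * 2 by omega]
    exact Nat.dvd_sub hj.2 (dvd_mul_right _ 2)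
  · simp only [coe_filter, mem_range, Set.mem_ofPred_eq] at hi hj hij
    have := hle i hi.2
    have := hle j hj.2
    omega

/-- With `n = 4m + 3`, `E = (q^4; q^4)_m`, `F = (q^2; q^4)_{m+1}`, `D = (q; q^4)_{2m+2}` and
`N = (q^3; q^4)_{2m+1} / (1 - q^n)`, this is the numerator of `E^2 / F^2 + q^(2m+1) N / D` over the
common denominator `F^2 D`. It carries the cancellation between the two sides of the congruence. -/
noncomputable def crossNumer (m : ℕ) : ℚ[X] :=
  qpochPoly 4 4 m ^ 2 * reflectedQpochPoly (4 * m + 3) 2 4 (m + 1) +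
    X ^ (2 * m + 1) * reflectedQpochPoly (4 * m + 3) 4 4 m * qpochPoly 2 4 (m + 1) ^ 2

/-- The denominator of `sidesDiff`, namely `(1 - q) q^(n-1) F^2 D` in the notation of
`crossNumer`. -/
noncomputable def diffDenom (m : ℕ) : ℚ[X] :=
  (1 - X) * X ^ (4 * m + 2) * qpochPoly 2 4 (m + 1) ^ 2 *
    reflectedQpochPoly (4 * m + 3) 2 4 (m + 1)

/-- The difference of the two sides of the congruence for `n = 4m + 3`, as a quotient of polynomials
(not in lowest terms). -/
noncomputable def sidesDiff (m : ℕ) : RatFunc ℚ :=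
  algebraMap ℚ[X] (RatFunc ℚ) (-(1 - X ^ (4 * m + 3)) ^ 3 * crossNumer m) /
    algebraMap ℚ[X] (RatFunc ℚ) (diffDenom m)

lemma one_sub_X_pow_sq_dvd_crossNumer (m : ℕ) :
    (1 - X ^ (4 * m + 3)) ^ 2 ∣ X ^ (2 * (m + 1) ^ 2) * crossNumer m := by
  have sum_two (k : ℕ) : ∑ j ∈ range k, (2 + 4 * j) = 2 * k ^ 2 := by
    induction k with
    | zero => rfl
    | succ k ih => rw [sum_range_succ, ih]; ring
  have sum_four (k : ℕ) : ∑ j ∈ range k, (4 + 4 * j) = 2 * k * (k + 1) := by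
    induction k with
    | zero => rfl
    | succ k ih => rw [sum_range_succ, ih]; ring
  obtain ⟨u, hu⟩ := one_sub_X_pow_sq_dvd_reflectedQpochPoly (n := 4 * m + 3) (a := 4) (b := 4)
    (m := m) (by omega)
  obtain ⟨v, hv⟩ := one_sub_X_pow_sq_dvd_reflectedQpochPoly (n := 4 * m + 3) (a := 2) (b := 4)
    (m := m + 1) (by omega)
  rw [sum_four] at hu
  rw [sum_two] at hv
  refine ⟨qpochPoly 4 4 m ^ 2 * v + X ^ (4 * m + 3) * qpochPoly 2 4 (m + 1) ^ 2 * u, ?_⟩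
  rw [crossNumer]
  linear_combination qpochPoly 4 4 m ^ 2 * hv + X ^ (4 * m + 3) * qpochPoly 2 4 (m + 1) ^ 2 * hu

section Cyclotomic

variable {d m : ℕ}

lemma le_emultiplicity_cyclotomic_crossNumer (hd : d ∣ 4 * m + 3) :
    2 * emultiplicity (cyclotomic d ℚ) (qpochPoly 4 4 m) +
        2 * emultiplicity (cyclotomic d ℚ) (qpochPoly 2 4 (m + 1)) ≤
      emultiplicity (cyclotomic d ℚ) (crossNumer m) := by
  have hpos : 0 < d := Nat.pos_of_dvd_of_pos hd (by omega)
  have hp := prime_cyclotomic_rat hpos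
  refine le_trans (le_min ?_ ?_) min_le_emultiplicity_add
  · rw [emultiplicity_mul hp, emultiplicity_pow hp,
      emultiplicity_cyclotomic_reflectedQpochPoly hpos hd two_pos (by omega), Nat.cast_two]
  · rw [emultiplicity_mul hp, emultiplicity_mul hp, emultiplicity_pow hp (a := qpochPoly _ _ _),
      emultiplicity_cyclotomic_reflectedQpochPoly hpos hd four_pos (by omega), Nat.cast_two,
      add_assoc]
    exact le_add_self

lemma emultiplicity_cyclotomic_diffDenom (hd : 1 < d) (hdn : d ∣ 4 * m + 3) :
    emultiplicity (cyclotomic d ℚ) (diffDenom m) =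
      4 * emultiplicity (cyclotomic d ℚ) (qpochPoly 2 4 (m + 1)) := by
  have hpos : 0 < d := by omega
  have hp := prime_cyclotomic_rat hpos
  have hX : emultiplicity (cyclotomic d ℚ) (X ^ (4 * m + 2)) = 0 :=
    emultiplicity_eq_zero.2 fun h ↦ cyclotomic_not_dvd_X hpos (hp.dvd_of_dvd_pow h)
  have hone : emultiplicity (cyclotomic d ℚ) (1 - X) = 0 := by
    simpa [hd.ne'] using emultiplicity_cyclotomic_one_sub_X_pow hpos one_pos
  rw [diffDenom, emultiplicity_mul hp, emultiplicity_mul hp, emultiplicity_mul hp, hX, hone,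
    emultiplicity_pow hp, emultiplicity_cyclotomic_reflectedQpochPoly hpos hdn two_pos (by omega)]
  push_cast
  ring

lemma cyclotomic_pow_dvd_num_sidesDiff {k : ℕ} (hd : 1 < d) (hdn : d ∣ 4 * m + 3)
    (hk : k + 4 * emultiplicity (cyclotomic d ℚ) (qpochPoly 2 4 (m + 1)) ≤
      3 + emultiplicity (cyclotomic d ℚ) (crossNumer m)) :
    cyclotomic d ℚ ^ k ∣ (sidesDiff m).num := by
  have hpos : 0 < d := by omega
  have hp := prime_cyclotomic_rat hpos
  refine pow_dvd_num_of_le_emultiplicity hp ?_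
  rw [emultiplicity_cyclotomic_diffDenom hd hdn, emultiplicity_mul hp, emultiplicity_neg,
    emultiplicity_pow hp, emultiplicity_cyclotomic_one_sub_X_pow hpos (by omega), if_pos hdn]
  simpa using hk

lemma cyclotomic_dvd_num_sidesDiff (hd : 1 < d) (hdn : d ∣ 4 * m + 3) :
    cyclotomic d ℚ ∣ (sidesDiff m).num := by
  have hpos : 0 < d := by omega
  have hodd : Odd d := Odd.of_dvd_nat (by grind) hdn
  rw [← pow_one (cyclotomic d ℚ)]
  refine cyclotomic_pow_dvd_num_sidesDiff hd hdn
    (le_trans ?_ (add_le_add_right (le_emultiplicity_cyclotomic_crossNumer hdn) 3))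
  rw [emultiplicity_cyclotomic_qpochPoly _ _ hpos two_pos,
    emultiplicity_cyclotomic_qpochPoly _ _ hpos four_pos]
  have hcard := card_dvd_two_add_four_mul_le hodd m
  norm_cast
  omega

end Cyclotomic

lemma cyclotomic_pow_five_dvd_num_sidesDiff (m : ℕ) :
    cyclotomic (4 * m + 3) ℚ ^ 5 ∣ (sidesDiff m).num := by
  have hpos : 0 < 4 * m + 3 := by omega
  have hp := prime_cyclotomic_rat hpos
  have hdvd : cyclotomic (4 * m + 3) ℚ ∣ 1 - X ^ (4 * m + 3) :=
    dvd_sub_comm.1 (cyclotomic.dvd_X_pow_sub_one _ ℚ)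
  have hcross : cyclotomic (4 * m + 3) ℚ ^ 2 ∣ crossNumer m :=
    hp.pow_dvd_of_dvd_mul_left 2
      (fun h ↦ cyclotomic_not_dvd_X hpos (hp.dvd_of_dvd_pow h))
      ((pow_dvd_pow_of_dvd hdvd 2).trans (one_sub_X_pow_sq_dvd_crossNumer m))
  have hnone : #{j ∈ range (m + 1) | 4 * m + 3 ∣ 2 + 4 * j} = 0 := by
    refine card_eq_zero.2 (filter_eq_empty_iff.2 fun j hj h ↦ ?_)
    have := Nat.le_of_dvd (by omega) h
    have := mem_range.1 hj
    omega
  refine cyclotomic_pow_dvd_num_sidesDiff (by omega) dvd_rfl ?_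
  rw [emultiplicity_cyclotomic_qpochPoly _ _ hpos two_pos, hnone]
  calc ((5 : ℕ) : ℕ∞) + 4 * (0 : ℕ) = 3 + 2 := by norm_num
    _ ≤ _ := add_le_add_right (le_emultiplicity_of_pow_dvd hcross) 3

lemma qpoch_succ' (x b : RatFunc ℚ) (m : ℕ) :
    qpoch x b (m + 1) = (1 - x) * qpoch (x * b) b m := by
  rw [qpoch, prod_range_succ', pow_zero, mul_one, mul_comm, qpoch]
  exact congrArg _ (prod_congr rfl fun i _ ↦ by rw [pow_succ', mul_assoc])

lemma one_sub_q_pow_ne_zero {a : ℕ} (ha : 0 < a) : 1 - q ^ a ≠ 0 := by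
  have h : (1 - X ^ a : ℚ[X]) ≠ 0 := fun h ↦ by simpa [ha.ne'] using congrArg (eval 0) h
  simpa [q] using (map_ne_zero_iff _ (RatFunc.algebraMap_injective ℚ)).2 h

lemma qpoch_q_pow_ne_zero {a : ℕ} (b m : ℕ) (ha : 0 < a) : qpoch (q ^ a) (q ^ b) m ≠ 0 := by
  refine prod_ne_zero_iff.2 fun i _ ↦ ?_
  rw [← pow_mul, ← pow_add]
  exact one_sub_q_pow_ne_zero (by omega)

lemma algebraMap_qpochPoly (a b m : ℕ) :
    algebraMap ℚ[X] (RatFunc ℚ) (qpochPoly a b m) = qpoch (q ^ a) (q ^ b) m := by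
  simp [qpochPoly, qpoch, q, pow_add, pow_mul]

lemma algebraMap_qpochPoly_succ (a b m : ℕ) :
    algebraMap ℚ[X] (RatFunc ℚ) (qpochPoly a b (m + 1)) =
      (1 - q ^ a) * qpoch (q ^ (a + b)) (q ^ b) m := by
  rw [algebraMap_qpochPoly, qpoch_succ', ← pow_add]

lemma qpoch_three_four_eq (m : ℕ) :
    qpoch (q ^ 3) (q ^ 4) (2 * m + 1) = (1 - q ^ (4 * m + 3)) *
      algebraMap ℚ[X] (RatFunc ℚ) (reflectedQpochPoly (4 * m + 3) 4 4 m) := by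
  rw [← algebraMap_qpochPoly, qpochPoly_two_mul_add_one, add_comm 3]
  simp [q]

lemma one_sub_q_mul_qpoch_five_four_eq (m : ℕ) :
    (1 - q) * qpoch (q ^ 5) (q ^ 4) (2 * m + 1) =
      algebraMap ℚ[X] (RatFunc ℚ) (reflectedQpochPoly (4 * m + 3) 2 4 (m + 1)) := by
  rw [← qpochPoly_two_mul (x := 1) (m + 1) (by ring), show 2 * (m + 1) = 2 * m + 1 + 1 by ring,
    algebraMap_qpochPoly_succ, pow_one]

lemma sub_eq_sidesDiff (m : ℕ) :
    -(qint (4 * m + 3 : ℕ) ^ 3) * ((q ^ (4 * m + 2))⁻¹ / (1 + q) ^ 2) *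
        (qpoch (q ^ 4) (q ^ 4) m ^ 2 / qpoch (q ^ 6) (q ^ 4) m ^ 2) -
      qint (4 * m + 3 : ℕ) ^ 2 * (q ^ (2 * m + 1))⁻¹ *
        (qpoch (q ^ 3) (q ^ 4) (2 * m + 1) / qpoch (q ^ 5) (q ^ 4) (2 * m + 1)) =
    sidesDiff m := by
  have hq : q ≠ 0 := RatFunc.X_ne_zero
  have hone_sub : 1 - q ≠ 0 := by simpa using one_sub_q_pow_ne_zero one_pos
  have hone_add : 1 + q ≠ 0 := right_ne_zero_of_mul (a := 1 - q) <| by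
    convert one_sub_q_pow_ne_zero two_pos using 1; ring
  have hF_ne := qpoch_q_pow_ne_zero (a := 6) 4 m (by norm_num)
  have hD_ne := qpoch_q_pow_ne_zero (a := 5) 4 (2 * m + 1) (by norm_num)
  simp only [sidesDiff, crossNumer, diffDenom, qint, zpow_natCast, map_mul, map_neg, map_sub,
    map_add, map_pow, map_one, RatFunc.algebraMap_X, ← q.eq_def, algebraMap_qpochPoly_succ,
    ← one_sub_q_mul_qpoch_five_four_eq, algebraMap_qpochPoly, qpoch_three_four_eq]
  rw [show 1 - q ^ 2 = (1 - q) * (1 + q) by ring]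
  field_simp
  ring

theorem stmt18 (n : ℕ) (hpos : 0 < n) (hmod : n % 4 = 3) :
    qcong
      (-(qint n ^ 3) * (q ^ (1 - (n : ℤ)) / (1 + q) ^ 2) *
        (qpoch (q ^ 4) (q ^ 4) ((n - 3) / 4) ^ 2 /
          qpoch (q ^ 6) (q ^ 4) ((n - 3) / 4) ^ 2))
      (qint n ^ 2 * q ^ ((1 - (n : ℤ)) / 2) *
        (qpoch (q ^ 3) (q ^ 4) ((n - 1) / 2) / qpoch (q ^ 5) (q ^ 4) ((n - 1) / 2)))
      ((∑ i ∈ Finset.range n, Polynomial.X ^ i) * Polynomial.cyclotomic n ℚ ^ 4) := by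
  obtain ⟨m, rfl⟩ : ∃ m, n = 4 * m + 3 := ⟨n / 4, by omega⟩
  have hhalf : (1 - ((4 * m + 3 : ℕ) : ℤ)) / 2 = -(2 * m + 1 : ℕ) := by omega
  have hone_sub : 1 - ((4 * m + 3 : ℕ) : ℤ) = -(4 * m + 2 : ℕ) := by omega
  rw [hhalf, hone_sub, show (4 * m + 3 - 3) / 4 = m by omega,
    show (4 * m + 3 - 1) / 2 = 2 * m + 1 by omega, zpow_neg, zpow_neg, zpow_natCast, zpow_natCast]
  refine qcong_of_dvd_num_sub ?_
  rw [sub_eq_sidesDiff]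
  exact geom_sum_mul_cyclotomic_pow_dvd (by omega)
    (fun d hdn hd ↦ cyclotomic_dvd_num_sidesDiff hd hdn) (cyclotomic_pow_five_dvd_num_sidesDiff m)
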